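/- Let (Γ,+,d) be a metric Abelian monoid and φ an admissible function with the vanishing defect property: for every ε > 0 and every quasi-linear sequence γ̄ with defect bounded by some multiple of φ, there exists a quasi-linear sequence γ̄' with dista(γ̄,γ̄') = 0 whose defect is bounded by an admissible function ψ satisfying ∫_1^∞ ψ(t)/t² dt < ε. Then linear sequences are dense: for every quasi-linear sequence γ̄ with defect bounded by some multiple of φ and every ε > 0, there exists γ ∈ Γ such that dista(γ̄, (n•γ)_{n∈ℕ}) < ε. -/

import Mathlib

open MeasureTheory Filter

/-- A pseudometric on `Γ`: reflexive-zero, symmetric, triangle inequality. -/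
def IsPseudoMetric {Γ : Type*} (d : Γ → Γ → ℝ) : Prop :=
  (∀ x, d x x = 0) ∧ (∀ x y, d x y = d y x) ∧ (∀ x y z, d x z ≤ d x y + d y z)

/-- A metric Abelian monoid: an additive commutative monoid with a pseudometric
for which addition is 1-Lipschitz in each argument. -/
def IsMetricAbelianMonoid {Γ : Type*} [AddCommMonoid Γ] (d : Γ → Γ → ℝ) : Prop :=
  IsPseudoMetric d ∧ ∀ a b c : Γ, d (a + b) (a + c) ≤ d b c

/-- `φ : [1,∞) → [0,∞)` is admissible with constant `D ≥ 0`: non-decreasing,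
summable against `dt/t²`, and `s·∫_s^∞ φ(t)/t² dt ≤ (D/8)·φ(s)` for all `s ≥ 1`. -/
def AdmissibleWith (φ : ℝ → ℝ) (D : ℝ) : Prop :=
  (∀ t, 1 ≤ t → 0 ≤ φ t) ∧ MonotoneOn φ (Set.Ici 1) ∧ 0 ≤ D ∧
  (∀ s, 1 ≤ s → IntegrableOn (fun t => φ t / t ^ 2) (Set.Ioi s)) ∧
  (∀ s, 1 ≤ s → s * ∫ t in Set.Ioi s, φ t / t ^ 2 ≤ D / 8 * φ s)

def Admissible (φ : ℝ → ℝ) : Prop := ∃ D, AdmissibleWith φ D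

/-- A sequence `γ : ℕ → Γ` is quasi-linear with defect bounded by `φ`
(with respect to the pseudometric `d`). -/
def QuasiLinear {Γ : Type*} [AddCommMonoid Γ] (d : Γ → Γ → ℝ) (φ : ℝ → ℝ)
    (γ : ℕ → Γ) : Prop :=
  γ 0 = 0 ∧ ∀ m n : ℕ, 1 ≤ m → 1 ≤ n →
    d (γ (m + n)) (γ m + γ n) ≤ φ ((m + n : ℕ) : ℝ)

/-- The asymptotic distance `lim_{n→∞} d(γ₁(n),γ₂(n))/n`, realized as a `limsup`
(for quasi-linear sequences the limit exists, so this is that limit). -/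
noncomputable def dista {Γ : Type*} (d : Γ → Γ → ℝ) (γ₁ γ₂ : ℕ → Γ) : ℝ :=
  Filter.limsup (fun n : ℕ => d (γ₁ n) (γ₂ n) / n) Filter.atTop


lemma tail_step (ψ : ℝ → ℝ) (h0 : ∀ t, 1 ≤ t → 0 ≤ ψ t) (hm : MonotoneOn ψ (Set.Ici 1))
    (hi : IntegrableOn (fun t => ψ t / t ^ 2) (Set.Ioi 1)) (s : ℝ) (hs : 1 ≤ s) :
    ψ s / (2 * s) + ∫ t in Set.Ioi (2 * s), ψ t / t ^ 2 ≤ ∫ t in Set.Ioi s, ψ t / t ^ 2 := by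
  have hs0 : 0 < s := by linarith
  have hU : Set.Ioi s = Set.Ioc s (2 * s) ∪ Set.Ioi (2 * s) :=
    (Set.Ioc_union_Ioi_eq_Ioi (by linarith)).symm
  have hi1 : IntegrableOn (fun t => ψ t / t ^ 2) (Set.Ioc s (2 * s)) :=
    hi.mono_set (fun t ht => lt_of_le_of_lt hs ht.1)
  have hi2 : IntegrableOn (fun t => ψ t / t ^ 2) (Set.Ioi (2 * s)) :=
    hi.mono_set (Set.Ioi_subset_Ioi (by linarith))
  rw [hU, setIntegral_union (Set.Ioc_disjoint_Ioi le_rfl) measurableSet_Ioi hi1 hi2]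
  gcongr
  have hne : ∀ t ∈ Set.uIcc s (2 * s), t ≠ 0 := by
    intro t ht
    rw [Set.uIcc_of_le (by linarith)] at ht
    have := ht.1
    linarith
  have hderiv : ∀ t ∈ Set.uIcc s (2 * s),
      HasDerivAt (fun t : ℝ => -(ψ s * t⁻¹)) (ψ s / t ^ 2) t := by
    intro t ht
    have h1 := ((hasDerivAt_inv (hne t ht)).const_mul (ψ s)).neg
    have e : ψ s / t ^ 2 = -(ψ s * -(t ^ 2)⁻¹) := by rw [div_eq_mul_inv]; ring
    rw [e]
    exact h1
  have hcont : ContinuousOn (fun t : ℝ => ψ s / t ^ 2) (Set.uIcc s (2 * s)) :=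
    continuousOn_const.div (continuousOn_pow 2) (fun t ht => pow_ne_zero 2 (hne t ht))
  have hint : IntervalIntegrable (fun t : ℝ => ψ s / t ^ 2) volume s (2 * s) :=
    hcont.intervalIntegrable
  have heq := intervalIntegral.integral_eq_sub_of_hasDerivAt hderiv hint
  rw [intervalIntegral.integral_of_le (by linarith)] at heq
  have hle : ∫ t in Set.Ioc s (2 * s), ψ s / t ^ 2 ≤ ∫ t in Set.Ioc s (2 * s), ψ t / t ^ 2 := by
    apply setIntegral_mono_on _ hi1 measurableSet_Ioc
    · intro t ht
      have : ψ s ≤ ψ t := hm hs (le_trans hs ht.1.le) ht.1.le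
      gcongr
    · exact (intervalIntegrable_iff_integrableOn_Ioc_of_le (by linarith)).1 hint
  rw [heq] at hle
  refine le_trans (le_of_eq ?_) hle
  field_simp
  ring

lemma tail_mono (ψ : ℝ → ℝ) (h0 : ∀ t, 1 ≤ t → 0 ≤ ψ t)
    (hi : IntegrableOn (fun t => ψ t / t ^ 2) (Set.Ioi 1)) (s : ℝ) (hs : 1 ≤ s) :
    0 ≤ ∫ t in Set.Ioi s, ψ t / t ^ 2 ∧
    ∫ t in Set.Ioi s, ψ t / t ^ 2 ≤ ∫ t in Set.Ioi 1, ψ t / t ^ 2 := by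
  have hn : ∀ t ∈ Set.Ioi (1 : ℝ), 0 ≤ ψ t / t ^ 2 := fun t ht =>
    div_nonneg (h0 t (le_of_lt ht)) (sq_nonneg t)
  constructor
  · exact setIntegral_nonneg measurableSet_Ioi
      (fun t ht => hn t (lt_of_le_of_lt hs ht))
  · apply setIntegral_mono_set hi
    · exact (ae_restrict_iff' measurableSet_Ioi).2 (Eventually.of_forall hn)
    · exact (Set.Ioi_subset_Ioi hs).eventuallyLE

lemma E_bound (ψ : ℝ → ℝ) (h0 : ∀ t, 1 ≤ t → 0 ≤ ψ t) (hm : MonotoneOn ψ (Set.Ici 1))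
    (hi : IntegrableOn (fun t => ψ t / t ^ 2) (Set.Ioi 1)) (E : ℕ → ℝ) (E0 : E 0 = 0)
    (E1 : E 1 = 0)
    (hE : ∀ m n : ℕ, 1 ≤ m → 1 ≤ n → E (m + n) ≤ ψ ((m + n : ℕ) : ℝ) + E m + E n) (n : ℕ) :
    E n ≤ 6 * n * ∫ t in Set.Ioi 1, ψ t / t ^ 2 := by
  have hstep := tail_step ψ h0 hm hi
  have hmono := tail_mono ψ h0 hi
  generalize hJ : (fun s : ℝ => ∫ t in Set.Ioi s, ψ t / t ^ 2) = J
  have hJ' : ∀ s : ℝ, ∫ t in Set.Ioi s, ψ t / t ^ 2 = J s := fun s => by rw [← hJ]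
  simp only [hJ'] at hstep hmono ⊢
  have hpsi : ∀ s, 1 ≤ s → ψ s ≤ 2 * s * (J s - J (2 * s)) := by
    intro s hs
    have := hstep s hs
    have h2 : ψ s / (2 * s) ≤ J s - J (2 * s) := by linarith
    rwa [div_le_iff₀ (by linarith), mul_comm] at h2
  have hpow : ∀ k : ℕ, E (2 ^ k) ≤ 2 * 2 ^ k * (J 1 - J (2 ^ (k + 1))) := by
    intro k
    induction k with
    | zero =>
      have := (hmono 2 (by norm_num)).2
      simp [E1]
      linarith
    | succ k ih =>
      have h1 := hE (2 ^ k) (2 ^ k) Nat.one_le_two_pow Nat.one_le_two_pow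
      have e : 2 ^ k + 2 ^ k = 2 ^ (k + 1) := by ring
      rw [e] at h1
      push_cast at h1
      have h2 := hpsi (2 ^ (k + 1)) (one_le_pow₀ (by norm_num))
      have e2 : (2 : ℝ) * 2 ^ (k + 1) = 2 ^ (k + 1 + 1) := by ring
      rw [e2] at h2 ⊢
      have e3 : (2 : ℝ) ^ (k + 1 + 1) = 4 * 2 ^ k := by ring
      calc E (2 ^ (k + 1)) ≤ _ := h1
        _ ≤ 2 ^ (k + 1 + 1) * (J (2 ^ (k + 1)) - J (2 ^ (k + 1 + 1)))
            + 2 * (2 * 2 ^ k * (J 1 - J (2 ^ (k + 1)))) := by linarith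
        _ = _ := by ring
  have hI : 0 ≤ J 1 := (hmono 1 le_rfl).1
  have hpow' : ∀ k : ℕ, E (2 ^ k) ≤ 2 * 2 ^ k * J 1 := by
    intro k
    refine (hpow k).trans ?_
    have := (hmono (2 ^ (k + 1)) (one_le_pow₀ (by norm_num))).1
    gcongr
    linarith
  induction n using Nat.strong_induction_on with
  | _ n ih =>
    rcases Nat.eq_zero_or_pos n with rfl | hn
    · simp [E0]
    · have hk1 : 2 ^ Nat.log 2 n ≤ n := Nat.pow_log_le_self 2 hn.ne'
      have hk2 : n < 2 ^ (Nat.log 2 n + 1) := Nat.lt_pow_succ_log_self (by norm_num) n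
      generalize Nat.log 2 n = k at hk1 hk2
      obtain ⟨r, rfl⟩ := Nat.exists_eq_add_of_le hk1
      have hp := hpow' k
      have hpos : (0 : ℝ) < 2 ^ k := by positivity
      rcases Nat.eq_zero_or_pos r with rfl | hr
      · push_cast
        simp only [add_zero]
        nlinarith
      · have h1 := hE (2 ^ k) r Nat.one_le_two_pow hr
        have h2 := ih r (by have := Nat.one_le_two_pow (n := k); omega)
        have hN : (1 : ℝ) ≤ ((2 ^ k + r : ℕ) : ℝ) := by exact_mod_cast hn
        have h3 := hpsi _ hN
        have h4 : 2 * ((2 ^ k + r : ℕ) : ℝ) * (J ((2 ^ k + r : ℕ) : ℝ)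
            - J (2 * ((2 ^ k + r : ℕ) : ℝ))) ≤ 2 * ((2 ^ k + r : ℕ) : ℝ) * J 1 := by
          have a := (hmono _ hN).2
          have b := (hmono (2 * ((2 ^ k + r : ℕ) : ℝ)) (by linarith)).1
          gcongr
          linarith
        have h5 : ((2 ^ k + r : ℕ) : ℝ) ≤ 2 * 2 ^ k := by
          have : 2 ^ k + r ≤ 2 * 2 ^ k := by rw [pow_succ] at hk2; omega
          exact_mod_cast this
        have h6 : ((2 ^ k + r : ℕ) : ℝ) * J 1 ≤ 2 * 2 ^ k * J 1 := by gcongr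
        have h7 : ((2 ^ k + r : ℕ) : ℝ) = 2 ^ k + r := by push_cast; ring
        have h8 : 6 * ((2 ^ k + r : ℕ) : ℝ) * J 1 = 6 * 2 ^ k * J 1 + 6 * r * J 1 := by
          rw [h7]; ring
        rw [h8]
        linarith

lemma quasi_bound {Γ : Type*} [AddCommMonoid Γ]
    (d : Γ → Γ → ℝ) (h : IsMetricAbelianMonoid d) (ψ : ℝ → ℝ)
    (h0 : ∀ t, 1 ≤ t → 0 ≤ ψ t) (hm : MonotoneOn ψ (Set.Ici 1))
    (hi : IntegrableOn (fun t => ψ t / t ^ 2) (Set.Ioi 1)) (γ : ℕ → Γ)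
    (hγ : QuasiLinear d ψ γ) (n : ℕ) :
    d (γ n) (n • γ 1) ≤ 6 * n * ∫ t in Set.Ioi 1, ψ t / t ^ 2 := by
  obtain ⟨⟨hr, hsym, htri⟩, hlip⟩ := h
  apply E_bound ψ h0 hm hi (fun n => d (γ n) (n • γ 1))
  · simp [hγ.1, hr]
  · simp [hr]
  · intro m n hm hn
    have h1 := hγ.2 m n hm hn
    have h2 := htri (γ (m + n)) (γ m + γ n) ((m + n) • γ 1)
    have h3 := htri (γ m + γ n) (γ m + n • γ 1) ((m + n) • γ 1)
    have h4 := hlip (γ m) (γ n) (n • γ 1)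
    have h5 := hlip (n • γ 1) (γ m) (m • γ 1)
    rw [add_comm (n • γ 1) (γ m), add_comm (n • γ 1) (m • γ 1), ← add_nsmul] at h5
    show d (γ (m + n)) ((m + n) • γ 1) ≤ _
    linarith

/-- If the vanishing defect property holds, then linear sequences are dense in
the space of quasi-linear sequences with the asymptotic distance. -/
theorem linear_sequences_dense {Γ : Type*} [AddCommMonoid Γ]
    (d : Γ → Γ → ℝ) (h : IsMetricAbelianMonoid d)
    (φ : ℝ → ℝ) (hφ : Admissible φ)
    (hvdp : ∀ ε > (0 : ℝ), ∀ γ : ℕ → Γ,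
      (∃ C ≥ (0 : ℝ), QuasiLinear d (fun t => C * φ t) γ) →
      ∃ (γ' : ℕ → Γ) (ψ : ℝ → ℝ), Admissible ψ ∧ QuasiLinear d ψ γ' ∧
        dista d γ γ' = 0 ∧ (∫ t in Set.Ioi (1 : ℝ), ψ t / t ^ 2) < ε) :
    ∀ γ : ℕ → Γ, (∃ C ≥ (0 : ℝ), QuasiLinear d (fun t => C * φ t) γ) →
      ∀ ε > (0 : ℝ), ∃ g : Γ, dista d γ (fun n : ℕ => n • g) < ε := by
  intro γ hγC ε hε
  obtain ⟨γ', ψ, ⟨D, hψ0, hψm, -, hψi, -⟩, hq, hd, hI⟩ := hvdp (ε / 12) (by linarith) γ hγC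
  obtain ⟨C, hC, hγ⟩ := hγC
  obtain ⟨D', hφ0, hφm, -, hφi, -⟩ := hφ
  have hb' := quasi_bound d h ψ hψ0 hψm (hψi 1 le_rfl) γ' hq
  have hb := quasi_bound d h (fun t => C * φ t) (fun t ht => mul_nonneg hC (hφ0 t ht))
    (fun a ha b hb hab => mul_le_mul_of_nonneg_left (hφm ha hb hab) hC)
    (by simpa only [mul_div_assoc, IntegrableOn] using (hφi 1 le_rfl).const_mul C) γ hγ
  generalize (∫ t in Set.Ioi (1 : ℝ), C * φ t / t ^ 2) = A at hb
  generalize (∫ t in Set.Ioi (1 : ℝ), ψ t / t ^ 2) = B at hb' hI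
  obtain ⟨⟨hr, hsym, htri⟩, hlip⟩ := h
  have hnn : ∀ x y, 0 ≤ d x y := by
    intro x y
    have := htri x y x
    rw [hr, hsym y x] at this
    linarith
  have hsm : ∀ (n : ℕ) (x y : Γ), d (n • x) (n • y) ≤ n * d x y := by
    intro n x y
    induction n with
    | zero => simp [hr]
    | succ n ih =>
      have h1 := htri (n • x + x) (n • x + y) (n • y + y)
      have h2 := hlip (n • x) x y
      have h3 := hlip y (n • x) (n • y)
      rw [add_comm y, add_comm y] at h3
      rw [succ_nsmul, succ_nsmul]
      push_cast
      linarith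
  have hbdd : IsBoundedUnder (· ≤ ·) atTop (fun n : ℕ => d (γ n) (γ' n) / n) := by
    refine isBoundedUnder_of_eventually_le (a := 6 * A + d (γ 1) (γ' 1) + 6 * B) ?_
    filter_upwards [eventually_ge_atTop 1] with n hn
    have hn' : (0 : ℝ) < n := by exact_mod_cast hn
    rw [div_le_iff₀ hn']
    have h1 := htri (γ n) (n • γ 1) (γ' n)
    have h2 := htri (n • γ 1) (n • γ' 1) (γ' n)
    have h3 := hsm n (γ 1) (γ' 1)
    have h4 := hb n
    have h5 := hb' n
    rw [hsym] at h5
    linarith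
  have hev := eventually_lt_of_limsup_lt (b := ε / 4)
    (show limsup (fun n : ℕ => d (γ n) (γ' n) / n) atTop < ε / 4 by
      have : limsup (fun n : ℕ => d (γ n) (γ' n) / n) atTop = 0 := hd
      rw [this]; linarith) hbdd
  refine ⟨γ' 1, lt_of_le_of_lt (b := ε / 4 + ε / 2) ?_ (by linarith)⟩
  unfold dista
  refine limsup_le_of_le ?_ ?_
  · exact (isBoundedUnder_of_eventually_ge (a := 0)
      (Eventually.of_forall fun n => div_nonneg (hnn _ _) (Nat.cast_nonneg n))).isCoboundedUnder_le
  · filter_upwards [hev, eventually_ge_atTop 1] with n h1 hn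
    have hn' : (0 : ℝ) < n := by exact_mod_cast hn
    rw [div_lt_iff₀ hn'] at h1
    rw [div_le_iff₀ hn']
    have h2 := htri (γ n) (γ' n) (n • γ' 1)
    have h3 := hb' n
    have h4 : n * B ≤ n * (ε / 12) := by gcongr
    linarith
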